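/- arXiv:1809.03673 — 2 statements merged into one kernel-verified Lean document; each statement's English description precedes it below -/
import Mathlib

section
/- The quaternary mixed sum x² + 2y² + 5(3z² − 2z) + 5(3t² − 2t) represents a nonnegative integer N (i.e., the equation x² + 2y² + 5(3z² − 2z) + 5(3t² − 2t) = N has an integer solution (x, y, z, t) ∈ ℤ⁴) if and only if N ∉ {15, 20}. In other words, the set of nonnegative integers not represented by x²+2y²+5P₈(z)+5P₈(t) is exactly {15, 20}. -/
theorem qr_aux (p b : ℕ) (hp : p.Prime) (hp4 : p % 4 = 1)
    (hb : b % 40 = 7 ∨ b % 40 = 13 ∨ b % 40 = 23 ∨ b % 40 = 37)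
    (h : (b : ℤ) ∣ (p : ℤ) + 10 ∨ (b : ℤ) ∣ 5 * (p : ℤ) + 2) :
    ∃ t a : ℤ, t ^ 2 + (b : ℤ) = p * a := by
  have : Fact p.Prime := ⟨hp⟩
  have hbodd : Odd b := by rw [Nat.odd_iff]; omega
  have hpodd : Odd p := by rw [Nat.odd_iff]; omega
  have h5 : jacobiSym 5 b = -1 := by
    rw [jacobiSym.mod_right 5 hbodd]
    change jacobiSym 5 (b % 20) = -1
    have : b % 20 = 7 ∨ b % 20 = 13 ∨ b % 20 = 3 ∨ b % 20 = 17 := by omega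
    rcases this with h | h | h | h <;> rw [h] <;> norm_num
  have h2 : jacobiSym (-2) b = -1 := by
    rw [jacobiSym.mod_right (-2) hbodd]
    change jacobiSym (-2) (b % 8) = -1
    have : b % 8 = 7 ∨ b % 8 = 5 := by omega
    rcases this with h | h <;> rw [h] <;> norm_num
  have hpb : jacobiSym p b = 1 := by
    rcases h with h | h
    · have e : (p : ℤ) % b = (5 * (-2)) % b := by
        apply Int.ModEq.symm
        rw [Int.modEq_iff_dvd]
        convert h using 1; ring
      rw [jacobiSym.mod_left' e, jacobiSym.mul_left, h5, h2]; norm_num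
    · have e : (5 * (p : ℤ)) % b = (-2) % b := by
        apply Int.ModEq.symm
        rw [Int.modEq_iff_dvd]
        convert h using 1; ring
      have := jacobiSym.mod_left' e
      rw [jacobiSym.mul_left, h5, h2] at this
      linarith
  have hbp : jacobiSym (-(b : ℤ)) p = 1 := by
    have h1 : jacobiSym (-1) p = 1 := by
      rw [jacobiSym.mod_right (-1) hpodd]
      have : p % (4 * (-1 : ℤ).natAbs) = 1 := by
        simp only [Int.natAbs_neg, Int.natAbs_one]; omega
      rw [this]; norm_num
    have : -(b : ℤ) = (-1) * b := by ring
    rw [this, jacobiSym.mul_left, h1, ← jacobiSym.quadratic_reciprocity_one_mod_four hp4 hbodd, hpb]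
    norm_num
  obtain ⟨w, hw⟩ := ZMod.isSquare_of_jacobiSym_eq_one hbp
  obtain ⟨t, rfl⟩ := ZMod.intCast_surjective w
  have : (((t ^ 2 + b : ℤ)) : ZMod p) = 0 := by
    push_cast at hw ⊢
    rw [pow_two, ← hw]; ring
  rw [ZMod.intCast_zmod_eq_zero_iff_dvd] at this
  obtain ⟨a, ha⟩ := this
  exact ⟨t, a, ha⟩

/-- Positive ternary forms of determinant 10, anisotropic at 5, representing `n`. -/
def Good (n a b c r s t : ℤ) : Prop :=
  0 < a ∧ 0 < a * b - t ^ 2 ∧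
  a * b * c + 2 * r * s * t - a * r ^ 2 - b * s ^ 2 - c * t ^ 2 = 10 ∧
  (∀ x y z : ℤ, (5 : ℤ) ∣ a * x ^ 2 + b * y ^ 2 + c * z ^ 2 + 2 * r * y * z + 2 * s * x * z
      + 2 * t * x * y →
    (5 : ℤ) ∣ a * x + t * y + s * z ∧ (5 : ℤ) ∣ t * x + b * y + r * z ∧
      (5 : ℤ) ∣ s * x + r * y + c * z) ∧
  ∃ x y z : ℤ, a * x ^ 2 + b * y ^ 2 + c * z ^ 2 + 2 * r * y * z + 2 * s * x * z
      + 2 * t * x * y = n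

theorem good_shift1 {n a b c r s t : ℤ} (k : ℤ) (h : Good n a b c r s t) :
    Good n a (b + 2 * k * t + k ^ 2 * a) c (r + k * s) s (t + k * a) := by
  obtain ⟨h1, h2, h3, h4, x, y, z, h5⟩ := h
  refine ⟨h1, by linarith, by linarith, ?_, x - k * y, y, z, by rw [← h5]; ring⟩
  intro x y z hd
  obtain ⟨g1, g2, g3⟩ := h4 (x + k * y) y z (by convert hd using 1; ring)
  refine ⟨by convert g1 using 1; ring, ?_, by convert g3 using 1; ring⟩
  obtain ⟨u, hu⟩ := g1
  obtain ⟨v, hv⟩ := g2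
  exact ⟨v + k * u, by linear_combination hv + k * hu⟩

theorem good_shift2 {n a b c r s t : ℤ} (k : ℤ) (h : Good n a b c r s t) :
    Good n a b (c + 2 * k * s + k ^ 2 * a) (r + k * t) (s + k * a) t := by
  obtain ⟨h1, h2, h3, h4, x, y, z, h5⟩ := h
  refine ⟨h1, by linarith, by linarith, ?_, x - k * z, y, z, by rw [← h5]; ring⟩
  intro x y z hd
  obtain ⟨g1, g2, g3⟩ := h4 (x + k * z) y z (by convert hd using 1; ring)
  refine ⟨by convert g1 using 1; ring, by convert g2 using 1; ring, ?_⟩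
  obtain ⟨u, hu⟩ := g1
  obtain ⟨v, hv⟩ := g3
  exact ⟨v + k * u, by linear_combination hv + k * hu⟩

theorem good_shift3 {n a b c r s t : ℤ} (k : ℤ) (h : Good n a b c r s t) :
    Good n a b (c + 2 * k * r + k ^ 2 * b) (r + k * b) (s + k * t) t := by
  obtain ⟨h1, h2, h3, h4, x, y, z, h5⟩ := h
  refine ⟨h1, by linarith, by linarith, ?_, x, y - k * z, z, by rw [← h5]; ring⟩
  intro x y z hd
  obtain ⟨g1, g2, g3⟩ := h4 x (y + k * z) z (by convert hd using 1; ring)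
  refine ⟨by convert g1 using 1; ring, by convert g2 using 1; ring, ?_⟩
  obtain ⟨u, hu⟩ := g2
  obtain ⟨v, hv⟩ := g3
  exact ⟨v + k * u, by linear_combination hv + k * hu⟩

theorem good_swap12 {n a b c r s t : ℤ} (h : Good n a b c r s t) :
    Good n b a c s r t := by
  obtain ⟨h1, h2, h3, h4, x, y, z, h5⟩ := h
  refine ⟨?_, by linarith, by linarith, ?_, y, x, z, by rw [← h5]; ring⟩
  · have : 0 < a * b := by nlinarith [sq_nonneg t]
    exact (pos_iff_pos_of_mul_pos this).1 h1
  intro x y z hd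
  obtain ⟨g1, g2, g3⟩ := h4 y x z (by convert hd using 1; ring)
  exact ⟨by convert g2 using 1; ring, by convert g1 using 1; ring, by convert g3 using 1; ring⟩

theorem good_identity {n a b c r s t : ℤ} (h : Good n a b c r s t) :
    (a * b - t ^ 2) * (a * c - s ^ 2) - (a * r - s * t) ^ 2 = 10 * a := by
  obtain ⟨h1, h2, h3, -⟩ := h
  rw [← h3]; ring

theorem good_swap23 {n a b c r s t : ℤ} (h : Good n a b c r s t) :
    Good n a c b r t s := by
  have hid := good_identity h
  obtain ⟨h1, h2, h3, h4, x, y, z, h5⟩ := h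
  refine ⟨h1, ?_, by linarith, ?_, x, z, y, by rw [← h5]; ring⟩
  · have : 0 < (a * b - t ^ 2) * (a * c - s ^ 2) := by nlinarith [sq_nonneg (a * r - s * t)]
    exact (pos_iff_pos_of_mul_pos this).1 h2
  intro x y z hd
  obtain ⟨g1, g2, g3⟩ := h4 x z y (by convert hd using 1; ring)
  exact ⟨by convert g1 using 1; ring, by convert g3 using 1; ring, by convert g2 using 1; ring⟩

theorem center (B A : ℤ) (hA : 0 < A) : ∃ k : ℤ, -A ≤ 2 * (B + k * A) ∧ 2 * (B + k * A) ≤ A := by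
  have h0 := Int.emod_nonneg B hA.ne'
  have h1 := Int.emod_lt_of_pos B hA
  have h2 := Int.mul_ediv_add_emod B A
  by_cases h : 2 * (B % A) ≤ A
  · exact ⟨-(B / A), by nlinarith, by nlinarith⟩
  · exact ⟨-(B / A) - 1, by nlinarith, by nlinarith⟩

theorem good_reduced {n a b c r s t : ℤ} (h : Good n a b c r s t) :
    ∃ a b c r s t : ℤ, Good n a b c r s t ∧ a ≤ b ∧ a * b - t ^ 2 ≤ a * c - s ^ 2 ∧
      -a ≤ 2 * t ∧ 2 * t ≤ a ∧ -a ≤ 2 * s ∧ 2 * s ≤ a ∧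
      -(a * b - t ^ 2) ≤ 2 * (a * r - s * t) ∧ 2 * (a * r - s * t) ≤ a * b - t ^ 2 := by
  classical
  have e1 : ∃ k : ℕ, ∃ b c r s t : ℤ, Good n k b c r s t :=
    ⟨a.toNat, b, c, r, s, t, by rw [Int.toNat_of_nonneg h.1.le]; exact h⟩
  obtain ⟨b1, c1, r1, s1, t1, hg1⟩ := Nat.find_spec e1
  have hmin1 : ∀ a' b c r s t : ℤ, Good n a' b c r s t → ((Nat.find e1 : ℕ) : ℤ) ≤ a' := by
    intro a' b c r s t hg
    have := Nat.find_min' e1 (m := a'.toNat)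
      ⟨b, c, r, s, t, by rw [Int.toNat_of_nonneg hg.1.le]; exact hg⟩
    have h0 := hg.1
    omega
  generalize ((Nat.find e1 : ℕ) : ℤ) = a0 at hg1 hmin1
  have e2 : ∃ k : ℕ, ∃ b c r s t : ℤ, Good n a0 b c r s t ∧ a0 * b - t ^ 2 = k :=
    ⟨(a0 * b1 - t1 ^ 2).toNat, b1, c1, r1, s1, t1, hg1, by
      rw [Int.toNat_of_nonneg hg1.2.1.le]⟩
  obtain ⟨b2, c2, r2, s2, t2, hg2, hA2⟩ := Nat.find_spec e2
  have hmin2 : ∀ b c r s t : ℤ, Good n a0 b c r s t →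
      ((Nat.find e2 : ℕ) : ℤ) ≤ a0 * b - t ^ 2 := by
    intro b c r s t hg
    have := Nat.find_min' e2 (m := (a0 * b - t ^ 2).toNat)
      ⟨b, c, r, s, t, hg, by rw [Int.toNat_of_nonneg hg.2.1.le]⟩
    have h0 := hg.2.1
    omega
  generalize ((Nat.find e2 : ℕ) : ℤ) = A0 at hA2 hmin2
  have ha0 := hg2.1
  have hA0 := hg2.2.1
  obtain ⟨k1, hk1, hk1'⟩ := center (a0 * r2 - s2 * t2) _ hA0
  have hg3 := good_shift3 k1 hg2
  obtain ⟨k2, hk2, hk2'⟩ := center t2 _ ha0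
  have hg4 := good_shift1 k2 hg3
  obtain ⟨k3, hk3, hk3'⟩ := center (s2 + k1 * t2) _ ha0
  have hg5 := good_shift2 k3 hg4
  refine ⟨_, _, _, _, _, _, hg5, hmin1 _ _ _ _ _ _ (good_swap12 hg5), ?_, hk2, hk2', hk3, hk3',
    ?_, ?_⟩
  · have := hmin2 _ _ _ _ _ (good_swap23 hg5)
    linarith
  · linarith
  · linarith

theorem good_rep {n a b c r s t : ℤ} (hn : n % 2 = 1) (h : Good n a b c r s t) :
    ∃ x y z : ℤ, x ^ 2 + 2 * y ^ 2 + 5 * z ^ 2 = n := by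
  obtain ⟨a, b, c, r, s, t, hg, hab, hAC, ht, ht', hs, hs', hB, hB'⟩ := good_reduced h
  have hid := good_identity hg
  obtain ⟨ha, hA, hdet, h5, x, y, z, hrep⟩ := hg
  have hA2 : 3 * (a * b - t ^ 2) ^ 2 ≤ 40 * a := by
    have : 4 * (a * r - s * t) ^ 2 ≤ (a * b - t ^ 2) ^ 2 := by nlinarith
    nlinarith
  have hA1 : 3 * a ^ 2 ≤ 4 * (a * b - t ^ 2) := by nlinarith
  have ha2 : a ≤ 2 := by
    by_contra hcon
    have h3 : 3 ≤ a := by omega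
    have : 9 * a ^ 4 ≤ 16 * (a * b - t ^ 2) ^ 2 := by nlinarith [sq_nonneg a]
    have h27 : 27 * a ≤ a ^ 4 := by
      have : 27 ≤ a ^ 3 := by nlinarith [mul_self_nonneg a, mul_nonneg ha.le ha.le]
      nlinarith
    nlinarith
  have hA5 : a * b - t ^ 2 ≤ 5 := by nlinarith
  interval_cases a
  · have t0 : t = 0 := by omega
    have s0 : s = 0 := by omega
    subst t0 s0
    have hb3 : b ≤ 3 := by nlinarith
    have hr1 : r ≤ 1 := by omega
    have hr2 : -1 ≤ r := by omega
    interval_cases b <;> interval_cases r <;> try omega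
    · exfalso
      have := h5 1 2 0 (by norm_num)
      omega
    · have : c = 5 := by omega
      subst this
      exact ⟨x, y, z, by rw [← hrep]; ring⟩
  · exfalso
    have t1 : t ≤ 1 := by omega
    have t2 : -1 ≤ t := by omega
    have s1 : s ≤ 1 := by omega
    have s2 : -1 ≤ s := by omega
    have heven : b % 2 = 0 → c % 2 = 0 → False := by
      intro hb hc
      obtain ⟨b', rfl⟩ : ∃ d, b = 2 * d := ⟨b / 2, by omega⟩
      obtain ⟨c', rfl⟩ : ∃ d, c = 2 * d := ⟨c / 2, by omega⟩
      have : n = 2 * (x ^ 2 + b' * y ^ 2 + c' * z ^ 2 + r * y * z + s * x * z + t * x * y) := by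
        rw [← hrep]; ring
      omega
    clear hid hA2 hA1 h
    have key := h5 1 2 0
    have key2 := h5 2 1 0
    have key3 := h5 (-2) 1 0
    clear h5
    have hb : b ≤ 3 := by
      interval_cases t <;> omega
    have hr1 : r ≤ 2 := by
      interval_cases t <;> interval_cases s <;> omega
    have hr2 : -2 ≤ r := by
      interval_cases t <;> interval_cases s <;> omega
    interval_cases b <;> interval_cases t <;> interval_cases s <;> interval_cases r <;>
      first
      | omega
      | exact heven (by omega) (by omega)

theorem good_init {n a b c r s t : ℤ} (ha : 0 < a) (hA : 0 < a * b - t ^ 2)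
    (h10 : a * b * c + 2 * r * s * t - a * r ^ 2 - b * s ^ 2 - c * t ^ 2 = 10)
    (h5 : (a * b - t ^ 2) % 5 = 2 ∨ (a * b - t ^ 2) % 5 = 3)
    (hrep : ∃ x y z : ℤ, a * x ^ 2 + b * y ^ 2 + c * z ^ 2 + 2 * r * y * z + 2 * s * x * z
      + 2 * t * x * y = n) : Good n a b c r s t := by
  refine ⟨ha, hA, h10, ?_, hrep⟩
  intro x y z hd
  have p5 : Prime (5 : ℤ) := by norm_num
  set A := a * b - t ^ 2 with hAdef
  have hA5 : ¬ (5 : ℤ) ∣ A := by omega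
  have aniso : ∀ u v : ℤ, (5 : ℤ) ∣ A * u ^ 2 + v ^ 2 → (5 : ℤ) ∣ u ∧ (5 : ℤ) ∣ v := by
    intro u v huv
    have key : ∀ A u v : ZMod 5, (A = 2 ∨ A = 3) → A * u ^ 2 + v ^ 2 = 0 → u = 0 ∧ v = 0 := by
      decide
    have c1 : ((A * u ^ 2 + v ^ 2 : ℤ) : ZMod 5) = 0 :=
      (ZMod.intCast_zmod_eq_zero_iff_dvd _ 5).2 huv
    have c2 : (A : ZMod 5) = 2 ∨ (A : ZMod 5) = 3 := by
      rcases h5 with h | h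
      · left
        have := (ZMod.intCast_eq_intCast_iff A 2 5).2 (by show A % 5 = 2 % 5; omega)
        exact_mod_cast this
      · right
        have := (ZMod.intCast_eq_intCast_iff A 3 5).2 (by show A % 5 = 3 % 5; omega)
        exact_mod_cast this
    push_cast at c1
    obtain ⟨d1, d2⟩ := key _ _ _ c2 c1
    exact ⟨(ZMod.intCast_zmod_eq_zero_iff_dvd _ 5).1 d1,
      (ZMod.intCast_zmod_eq_zero_iff_dvd _ 5).1 d2⟩
  have ha5 : ¬ (5 : ℤ) ∣ a := by
    rintro ⟨a', rfl⟩
    have := aniso 1 t ⟨a' * b, by rw [hAdef]; ring⟩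
    omega
  obtain ⟨e, he⟩ := hd
  obtain ⟨g1, g2⟩ := aniso (a * x + t * y + s * z) (A * y + (a * r - s * t) * z) (by
    refine ⟨a * A * e - 2 * a * z ^ 2, ?_⟩
    have : 5 * (a * A * e - 2 * a * z ^ 2) = a * A * (5 * e) - 10 * a * z ^ 2 := by ring
    rw [this, ← he, ← h10, hAdef]; ring)
  obtain ⟨u, hu⟩ := g1
  obtain ⟨v, hv⟩ := g2
  refine ⟨⟨u, hu⟩, ?_, ?_⟩
  · refine (p5.dvd_or_dvd (?_ : (5 : ℤ) ∣ a * _)).resolve_left ha5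
    refine ⟨t * u + v, ?_⟩
    have : 5 * (t * u + v) = t * (5 * u) + 5 * v := by ring
    rw [this, ← hu, ← hv, hAdef]; ring
  · refine (p5.dvd_or_dvd (?_ : (5 : ℤ) ∣ a * _)).resolve_left ha5
    refine (p5.dvd_or_dvd (?_ : (5 : ℤ) ∣ A * _)).resolve_left hA5
    refine ⟨A * s * u + (a * r - s * t) * v + 2 * a * z, ?_⟩
    have : 5 * (A * s * u + (a * r - s * t) * v + 2 * a * z)
      = A * s * (5 * u) + (a * r - s * t) * (5 * v) + 10 * (a * z) := by ring
    rw [this, ← hu, ← hv, ← h10, hAdef]; ring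

theorem cop2 (x : ℤ) (h : x % 2 = 1) : IsCoprime x 2 := ⟨1, -(x / 2), by omega⟩

theorem cop5 (x : ℤ) (h : x % 5 ≠ 0) : IsCoprime x 5 := by
  have : x % 5 = 1 ∨ x % 5 = 2 ∨ x % 5 = 3 ∨ x % 5 = 4 := by omega
  rcases this with h | h | h | h
  · exact ⟨1, -(x / 5), by omega⟩
  · exact ⟨3, -(3 * (x / 5)) - 1, by omega⟩
  · exact ⟨2, -(2 * (x / 5)) - 1, by omega⟩
  · exact ⟨4, -(4 * (x / 5)) - 3, by omega⟩

theorem rep_case1 (n : ℤ) (hn : 0 < n) (hodd : n % 2 = 1) (h5 : n % 5 ≠ 0) :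
    ∃ x y z : ℤ, x ^ 2 + 2 * y ^ 2 + 5 * z ^ 2 = n := by
  obtain ⟨b0, hb0, hb0'⟩ : ∃ b0 : ℤ, (b0 = 7 ∨ b0 = 13) ∧ (n * b0) % 4 = 3 := by
    by_cases h : n % 4 = 1
    · exact ⟨7, by simp, by omega⟩
    · exact ⟨13, by simp, by omega⟩
  have hcop : IsCoprime (n * b0 - 10) ((40 * n.toNat : ℕ) : ℤ) := by
    push_cast
    rw [Int.toNat_of_nonneg hn.le]
    have c2 : IsCoprime (n * b0 - 10) 2 := cop2 _ (by omega)
    have c5 : IsCoprime (n * b0 - 10) 5 := cop5 _ (by rcases hb0 with rfl | rfl <;> omega)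
    have cn : IsCoprime (n * b0 - 10) n := by
      obtain ⟨u, v, huv⟩ := (cop2 n hodd).mul_right (cop5 n h5)
      exact ⟨-v, u + v * b0, by linear_combination huv⟩
    rw [show (40 : ℤ) * n = 2 * 2 * 2 * 5 * n by ring]
    exact (((c2.mul_right c2).mul_right c2).mul_right c5).mul_right cn
  obtain ⟨p, -, hp, hmod⟩ := Nat.forall_exists_prime_gt_and_zmodEq 0 (by omega) hcop
  obtain ⟨k, hk⟩ := (Int.modEq_iff_dvd.1 hmod.symm)
  push_cast at hk
  rw [Int.toNat_of_nonneg hn.le] at hk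
  have hpp : (0 : ℤ) < p := by exact_mod_cast hp.pos
  have hpb : (p : ℤ) = n * (b0 + 40 * k) - 10 := by linear_combination hk
  have hbpos : 0 < b0 + 40 * k := by
    by_contra hcon
    nlinarith
  obtain ⟨b, hb⟩ := Int.eq_ofNat_of_zero_le hbpos.le
  obtain ⟨t, a, hta⟩ := qr_aux p b hp
    (by
      have : (p : ℤ) = n * b0 + 4 * (10 * (n * k)) - 10 := by rw [hpb]; ring
      omega)
    (by omega)
    (Or.inl ⟨n, by rw [hpb, ← hb]; ring⟩)
  rw [← hb] at hta
  have hapos : 0 < a := by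
    by_contra hcon
    nlinarith [sq_nonneg t]
  refine good_rep hodd (good_init (n := n) (a := a) (b := p) (c := n) (r := 0) (s := 1) (t := t)
    hapos (by linarith) ?_ ?_ ⟨0, 0, 1, by ring⟩)
  · linear_combination (-n) * hta - hpb
  · have : a * p - t ^ 2 = b0 + 40 * k := by linarith
    rw [this]; omega

theorem rep_case2 (m : ℤ) (hn : 0 < m) (hodd : m % 2 = 1) (h5 : m % 5 = 1 ∨ m % 5 = 4) :
    ∃ x y z : ℤ, x ^ 2 + 2 * y ^ 2 + 5 * z ^ 2 = 5 * m := by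
  obtain ⟨b0, hb0, hb0', hb5⟩ : ∃ b0 : ℤ, (b0 = 7 ∨ b0 = 13 ∨ b0 = 23 ∨ b0 = 37) ∧
      (m * b0) % 4 = 3 ∧ (m * b0) % 5 = 2 := by
    by_cases h : m % 4 = 1 <;> rcases h5 with h5 | h5
    · exact ⟨7, by simp, by omega, by omega⟩
    · exact ⟨23, by simp, by omega, by omega⟩
    · exact ⟨37, by simp, by omega, by omega⟩
    · exact ⟨13, by simp, by omega, by omega⟩
  obtain ⟨p0, hp0⟩ : ∃ p0, m * b0 - 2 = 5 * p0 := ⟨(m * b0 - 2) / 5, by omega⟩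
  have hcop : IsCoprime p0 ((8 * m.toNat : ℕ) : ℤ) := by
    push_cast
    rw [Int.toNat_of_nonneg hn.le]
    have c2 : IsCoprime p0 2 := cop2 _ (by omega)
    have cn : IsCoprime p0 m := by
      obtain ⟨u, v, huv⟩ := cop2 m hodd
      exact ⟨-5 * v, u + v * b0, by linear_combination huv + v * hp0⟩
    rw [show (8 : ℤ) * m = 2 * 2 * 2 * m by ring]
    exact ((c2.mul_right c2).mul_right c2).mul_right cn
  obtain ⟨p, -, hp, hmod⟩ := Nat.forall_exists_prime_gt_and_zmodEq 0 (by omega) hcop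
  obtain ⟨k, hk⟩ := (Int.modEq_iff_dvd.1 hmod.symm)
  push_cast at hk
  rw [Int.toNat_of_nonneg hn.le] at hk
  have hpp : (0 : ℤ) < p := by exact_mod_cast hp.pos
  have hpb : 5 * (p : ℤ) = m * (b0 + 40 * k) - 2 := by linear_combination 5 * hk - hp0
  have hbpos : 0 < b0 + 40 * k := by
    by_contra hcon
    nlinarith
  obtain ⟨b, hb⟩ := Int.eq_ofNat_of_zero_le hbpos.le
  obtain ⟨t, a, hta⟩ := qr_aux p b hp
    (by
      have : 5 * (p : ℤ) = m * b0 + 4 * (10 * (m * k)) - 2 := by rw [hpb]; ring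
      omega)
    (by omega)
    (Or.inr ⟨m, by rw [hpb, ← hb]; ring⟩)
  rw [← hb] at hta
  have hapos : 0 < a := by
    by_contra hcon
    nlinarith [sq_nonneg t]
  refine good_rep (by omega) (good_init (n := 5 * m) (a := a) (b := p) (c := 5 * m) (r := 0)
    (s := 5) (t := t) hapos (by linarith) ?_ ?_ ⟨0, 0, 1, by ring⟩)
  · linear_combination (-5 * m) * hta - 5 * hpb
  · have : a * p - t ^ 2 = b0 + 40 * k := by linarith
    rw [this]; omega

theorem step3 (x z : ℤ) (h : ¬ (3 ∣ x ∧ 3 ∣ z)) :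
    ∃ x' z' : ℤ, x' ^ 2 + 5 * z' ^ 2 = 9 * (x ^ 2 + 5 * z ^ 2) ∧ ¬ (3 : ℤ) ∣ z' := by
  by_cases h1 : (3 : ℤ) ∣ x + 2 * z
  · exact ⟨2 * x + 5 * z, -x + 2 * z, by ring, by omega⟩
  · exact ⟨2 * x - 5 * z, x + 2 * z, by ring, h1⟩

theorem descent3 : ∀ (N : ℕ) (x z : ℤ), x.natAbs + z.natAbs ≤ N → ¬ (x = 0 ∧ z = 0) →
    ∃ x' z' : ℤ, x' ^ 2 + 5 * z' ^ 2 = x ^ 2 + 5 * z ^ 2 ∧ ¬ (3 ∣ x' ∧ 3 ∣ z') := by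
  intro N
  induction N with
  | zero => intro x z h1 h2; omega
  | succ N ih =>
    intro x z h1 h2
    by_cases h : 3 ∣ x ∧ 3 ∣ z
    · obtain ⟨⟨X, rfl⟩, ⟨Z, rfl⟩⟩ := h
      obtain ⟨x', z', h3, h4⟩ := ih X Z (by omega) (by omega)
      obtain ⟨x'', z'', h5, h6⟩ := step3 x' z' h4
      exact ⟨x'', z'', by rw [h5, h3]; ring, fun h => h6 h.2⟩
    · exact ⟨x, z, rfl, h⟩

theorem good3 (n : ℤ) (hodd : n % 2 = 1) (h3 : n % 3 = 2)
    (h : ∃ x y z : ℤ, x ^ 2 + 2 * y ^ 2 + 5 * z ^ 2 = n) :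
    ∃ x y z : ℤ, x ^ 2 + 2 * y ^ 2 + 5 * z ^ 2 = n ∧ ¬ (3 : ℤ) ∣ z := by
  obtain ⟨x, y, z, h⟩ := h
  by_cases hz : (3 : ℤ) ∣ z
  · have hx : (3 : ℤ) ∣ x := by
      obtain ⟨Z, rfl⟩ := hz
      have hy : y % 3 = 0 ∨ y % 3 = 1 ∨ y % 3 = 2 := by omega
      have hx : x % 3 = 0 ∨ x % 3 = 1 ∨ x % 3 = 2 := by omega
      have e : (x ^ 2 + 2 * y ^ 2) % 3 = 2 := by
        have : x ^ 2 + 2 * y ^ 2 = n - 3 * (15 * Z ^ 2) := by rw [← h]; ring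
        omega
      rcases hx with hx | hx | hx
      · omega
      all_goals
        rcases hy with hy | hy | hy <;>
          simp [pow_two, Int.add_emod, Int.mul_emod, hx, hy] at e
    obtain ⟨X, rfl⟩ := hx
    obtain ⟨Z, rfl⟩ := hz
    by_cases h0 : X = 0 ∧ Z = 0
    · obtain ⟨rfl, rfl⟩ := h0
      exfalso
      have : n = 2 * y ^ 2 := by rw [← h]; ring
      omega
    · obtain ⟨x', z', h5, h6⟩ := descent3 _ X Z le_rfl h0
      obtain ⟨x'', z'', h7, h8⟩ := step3 x' z' h6
      exact ⟨x'', y, z'', by rw [← h]; linear_combination h7 + 9 * h5, h8⟩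
  · exact ⟨x, y, z, h, hz⟩

theorem octa (u : ℤ) (h : ¬ (3 : ℤ) ∣ u) : ∃ z : ℤ, 3 * (3 * z ^ 2 - 2 * z) = u ^ 2 - 1 := by
  by_cases h1 : u % 3 = 1
  · obtain ⟨w, rfl⟩ : ∃ w, u = 3 * w + 1 := ⟨u / 3, by omega⟩
    exact ⟨-w, by ring⟩
  · obtain ⟨w, rfl⟩ : ∃ w, u = 3 * w - 1 := ⟨(u + 1) / 3, by omega⟩
    exact ⟨w, by ring⟩

theorem three_div (x y : ℤ) (h : (3 : ℤ) ∣ x ^ 2 + 2 * y ^ 2) :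
    ∃ a b : ℤ, x ^ 2 + 2 * y ^ 2 = 3 * (a ^ 2 + 2 * b ^ 2) := by
  have h' : (3 : ℤ) ∣ (x - y) * (x + y) := by
    have : (x - y) * (x + y) = x ^ 2 + 2 * y ^ 2 - 3 * y ^ 2 := by ring
    omega
  have p3 : Prime (3 : ℤ) := by norm_num
  rcases p3.dvd_or_dvd h' with ⟨w, hw⟩ | ⟨w, hw⟩
  · obtain rfl : x = y + 3 * w := by linarith
    exact ⟨y + w, w, by ring⟩
  · obtain rfl : x = -y + 3 * w := by linarith
    exact ⟨-y + w, w, by ring⟩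

theorem finish (N v : ℤ) (hv : ¬ (3 : ℤ) ∣ v)
    (hodd : (3 * N + 10 - 5 * v ^ 2) % 2 = 1)
    (h : ∃ x y z : ℤ, x ^ 2 + 2 * y ^ 2 + 5 * z ^ 2 = 3 * N + 10 - 5 * v ^ 2) :
    ∃ x y z t : ℤ, x ^ 2 + 2 * y ^ 2 + 5 * (3 * z ^ 2 - 2 * z) +
            5 * (3 * t ^ 2 - 2 * t) = N := by
  obtain ⟨t, ht⟩ := octa v hv
  obtain ⟨x, y, u, h1, hu⟩ := good3 _ hodd (by omega) h
  obtain ⟨z, hz⟩ := octa u hu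
  obtain ⟨a, b, hab⟩ := three_div x y (by omega)
  exact ⟨a, b, z, t, by linarith⟩

theorem small_dec : ∀ N ∈ Finset.range 170, N ≠ 15 → N ≠ 20 →
    ∃ x ∈ Finset.range 14, ∃ y ∈ Finset.range 10, ∃ z ∈ [(0 : ℤ), 1, -1, 2, -2, 3, -3],
      ∃ t ∈ [(0 : ℤ), 1, -1, 2, -2, 3, -3],
      (x : ℤ) ^ 2 + 2 * (y : ℤ) ^ 2 + 5 * (3 * z ^ 2 - 2 * z) +
            5 * (3 * t ^ 2 - 2 * t) = (N : ℤ) := by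
  decide +kernel

theorem large (N : ℤ) (hN : 170 ≤ N) :
    ∃ x y z t : ℤ, x ^ 2 + 2 * y ^ 2 + 5 * (3 * z ^ 2 - 2 * z) +
            5 * (3 * t ^ 2 - 2 * t) = N := by
  by_cases h5 : N % 5 = 0
  · obtain ⟨m, rfl⟩ : ∃ m, N = 5 * m := ⟨N / 5, by omega⟩
    have key : ∀ v : ℤ, ¬ (3 : ℤ) ∣ v → v ^ 2 ≤ 100 → (3 * m + 2 - v ^ 2) % 2 = 1 →
        ((3 * m + 2 - v ^ 2) % 5 = 1 ∨ (3 * m + 2 - v ^ 2) % 5 = 4) →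
        ∃ x y z t : ℤ, x ^ 2 + 2 * y ^ 2 + 5 * (3 * z ^ 2 - 2 * z) +
            5 * (3 * t ^ 2 - 2 * t) = 5 * m := by
      intro v h3 h100 h2 h5
      refine finish _ v h3 (by omega) ?_
      obtain ⟨x, y, z, h⟩ := rep_case2 (3 * m + 2 - v ^ 2) (by omega) h2 h5
      exact ⟨x, y, z, by rw [h]; ring⟩
    have k1 := key 1 (by norm_num) (by norm_num)
    have k2 := key 2 (by norm_num) (by norm_num)
    have k4 := key 4 (by norm_num) (by norm_num)
    have k5 := key 5 (by norm_num) (by norm_num)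
    have k7 := key 7 (by norm_num) (by norm_num)
    have k10 := key 10 (by norm_num) (by norm_num)
    have : m % 10 = 0 ∨ m % 10 = 1 ∨ m % 10 = 2 ∨ m % 10 = 3 ∨ m % 10 = 4 ∨ m % 10 = 5 ∨
      m % 10 = 6 ∨ m % 10 = 7 ∨ m % 10 = 8 ∨ m % 10 = 9 := by omega
    clear key
    rcases this with h | h | h | h | h | h | h | h | h | h <;>
      first
      | exact k1 (by omega) (by omega)
      | exact k2 (by omega) (by omega)
      | exact k4 (by omega) (by omega)
      | exact k5 (by omega) (by omega)
      | exact k7 (by omega) (by omega)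
      | exact k10 (by omega) (by omega)
  · by_cases h2 : N % 2 = 0
    · exact finish N 1 (by norm_num) (by omega) (rep_case1 _ (by omega) (by omega) (by omega))
    · exact finish N 2 (by norm_num) (by omega) (rep_case1 _ (by omega) (by omega) (by omega))

theorem octa_small (z : ℤ) : 0 ≤ 3 * z ^ 2 - 2 * z ∧
    (3 * z ^ 2 - 2 * z = 0 ∨ 3 * z ^ 2 - 2 * z = 1 ∨ 5 ≤ 3 * z ^ 2 - 2 * z) := by
  rcases lt_trichotomy z 0 with h | h | h
  · have : 5 ≤ 3 * z ^ 2 - 2 * z := by nlinarith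
    omega
  · subst h; norm_num
  · by_cases h1 : z = 1
    · subst h1; norm_num
    · have : 2 ≤ z := by omega
      have : 5 ≤ 3 * z ^ 2 - 2 * z := by nlinarith
      omega

theorem bin_none (x y : ℤ) (h : x ^ 2 + 2 * y ^ 2 = 5 ∨ x ^ 2 + 2 * y ^ 2 = 10 ∨
    x ^ 2 + 2 * y ^ 2 = 15 ∨ x ^ 2 + 2 * y ^ 2 = 20) : False := by
  have h20 : x ^ 2 + 2 * y ^ 2 ≤ 20 := by omega
  have hx : x ≤ 4 := by nlinarith [sq_nonneg y]
  have hx' : -4 ≤ x := by nlinarith [sq_nonneg y]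
  have hy : y ≤ 3 := by nlinarith [sq_nonneg x]
  have hy' : -3 ≤ y := by nlinarith [sq_nonneg x]
  interval_cases x <;> interval_cases y <;> omega

theorem exceptions_1_2_5_5 :
    ∀ N : ℤ, 0 ≤ N →
      ((∃ x y z t : ℤ,
          x ^ 2 + 2 * y ^ 2 + 5 * (3 * z ^ 2 - 2 * z) +
            5 * (3 * t ^ 2 - 2 * t) = N) ↔ N ≠ 15 ∧ N ≠ 20) := by
  intro N hN
  constructor
  · rintro ⟨x, y, z, t, h⟩
    obtain ⟨h1, h2⟩ := octa_small z
    obtain ⟨h3, h4⟩ := octa_small t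
    have hb := bin_none x y
    have hx := sq_nonneg x
    have hy := sq_nonneg y
    generalize 3 * z ^ 2 - 2 * z = P at *
    generalize 3 * t ^ 2 - 2 * t = Q at *
    by_contra hcon
    have hN' : N = 15 ∨ N = 20 := by omega
    have : x ^ 2 + 2 * y ^ 2 = 0 := by
      by_contra h0
      apply hb
      omega
    omega
  · rintro ⟨h15, h20⟩
    by_cases hL : 170 ≤ N
    · exact large N hL
    · obtain ⟨k, rfl⟩ := Int.eq_ofNat_of_zero_le hN
      obtain ⟨x, -, y, -, z, -, t, -, h⟩ := small_dec k (Finset.mem_range.2 (by omega))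
        (by omega) (by omega)
      exact ⟨x, y, z, t, h⟩
end

section
/- For every integer α with 16 ≤ α ≤ 20 and every nonnegative integer N, the equation x² + 2y² + αz² + 5(3t² − 2t) + 5(3s² − 2s) + 5(3u² − 2u) = N has an integer solution (x, y, z, t, s, u) ∈ ℤ⁶; and for every β with β = 5 or 16 ≤ β ≤ 20 and every nonnegative integer N, the equation x² + 2y² + 5(3z² − 2z) + 5(3t² − 2t) + 5(3s² − 2s) + β(3u² − 2u) = N has an integer solution in ℤ⁶. That is, the senary mixed sums x²+2y²+αz²+5P₈(t)+5P₈(s)+5P₈(u) (16 ≤ α ≤ 20) and x²+2y²+5P₈(z)+5P₈(t)+5P₈(s)+βP₈(u) (β = 5 or 16 ≤ β ≤ 20) are universal. -/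
def tern (a b c d e f x y z : ℤ) : ℤ :=
  a * x ^ 2 + b * y ^ 2 + c * z ^ 2 + 2 * d * y * z + 2 * e * x * z + 2 * f * x * y

theorem exists_shift (a f : ℤ) (ha : 0 < a) : ∃ k : ℤ, 4 * (f + k * a) ^ 2 ≤ a ^ 2 := by
  refine ⟨-((2 * f + a) / (2 * a)), ?_⟩
  have h1 := Int.emod_add_mul_ediv (2 * f + a) (2 * a)
  have h2 := Int.emod_nonneg (2 * f + a) (show 2 * a ≠ 0 by omega)
  have h3 := Int.emod_lt_of_pos (2 * f + a) (show 0 < 2 * a by omega)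
  set q := (2 * f + a) / (2 * a)
  set r := (2 * f + a) % (2 * a)
  have h4 : 2 * (f + -q * a) = r - a := by linarith
  have : 4 * (f + -q * a) ^ 2 = (r - a) ^ 2 := by rw [← h4]; ring
  rw [this]
  nlinarith

theorem tern_sum (n : ℕ) : ∀ a b c d e f : ℤ, 0 < a → 0 < a * b - f ^ 2 →
    a * b * c + 2 * d * e * f - a * d ^ 2 - b * e ^ 2 - c * f ^ 2 = 1 →
    a + (a * b - f ^ 2) < n → ∀ x y z : ℤ, ∃ p q r : ℤ,
      tern a b c d e f x y z = p ^ 2 + q ^ 2 + r ^ 2 := by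
  induction n with
  | zero => intro a b c d e f ha hb _ h; push_cast at h; omega
  | succ n ih =>
    intro a b c d e f ha hB hdet hn x y z
    push_cast at hn
    by_cases hA : 4 * (a * b - f ^ 2) < 3 * a ^ 2
    · obtain ⟨k, hk⟩ := exists_shift a f ha
      have e1 : a * (b + 2 * k * f + k ^ 2 * a) = (a * b - f ^ 2) + (f + k * a) ^ 2 := by ring
      have h1 : 0 < b + 2 * k * f + k ^ 2 * a := by
        by_contra h
        nlinarith [sq_nonneg (f + k * a)]
      have h2 : b + 2 * k * f + k ^ 2 * a < a := by
        by_contra h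
        nlinarith
      have e2 : (b + 2 * k * f + k ^ 2 * a) * a - (f + k * a) ^ 2 = a * b - f ^ 2 := by ring
      obtain ⟨p, q, r, h⟩ := ih (b + 2 * k * f + k ^ 2 * a) a c e (d + k * e) (f + k * a) h1
        (by rw [e2]; exact hB) (by rw [← hdet]; ring) (by rw [e2]; linarith) y (x - k * y) z
      exact ⟨p, q, r, by rw [← h]; unfold tern; ring⟩
    · by_cases hB2 : 4 * a < 3 * (a * b - f ^ 2) ^ 2
      · obtain ⟨k, hk⟩ := exists_shift (a * b - f ^ 2) (a * d - e * f) hB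
        have e0 : (a * b - f ^ 2) * (a * c - e ^ 2) - (a * d - e * f) ^ 2 = a := by
          linear_combination a * hdet
        -- substitute y -> y + k z
        have e1 : (a * b - f ^ 2) * (a * (c + 2 * k * d + k ^ 2 * b) - (e + k * f) ^ 2)
            = a + ((a * d - e * f) + k * (a * b - f ^ 2)) ^ 2 := by
          linear_combination e0
        have h1 : 0 < a * (c + 2 * k * d + k ^ 2 * b) - (e + k * f) ^ 2 := by
          by_contra h
          nlinarith [sq_nonneg ((a * d - e * f) + k * (a * b - f ^ 2))]
        have h2 : a * (c + 2 * k * d + k ^ 2 * b) - (e + k * f) ^ 2 < a * b - f ^ 2 := by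
          by_contra h
          nlinarith
        obtain ⟨p, q, r, h⟩ := ih a (c + 2 * k * d + k ^ 2 * b) b (d + k * b) f (e + k * f) ha
          h1 (by rw [← hdet]; ring) (by linarith) x z (y - k * z)
        exact ⟨p, q, r, by rw [← h]; unfold tern; ring⟩
      · push Not at hA hB2
        set B := a * b - f ^ 2 with hBdef
        have ha1 : a = 1 := by
          by_contra hne
          have h2 : 2 ≤ a := by omega
          by_cases hab : B ≤ a
          · nlinarith
          · nlinarith
        have hB1 : B = 1 := by
          subst ha1
          nlinarith
        refine ⟨a * x + f * y + e * z, B * y + (a * d - e * f) * z, z, ?_⟩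
        rw [hB1]
        subst ha1
        have hb : b = 1 + f ^ 2 := by linarith
        subst hb
        have hc : c = 1 - 2 * d * e * f + d ^ 2 + (1 + f ^ 2) * e ^ 2 := by
          linear_combination hdet
        subst hc
        unfold tern
        ring

theorem three_sq (m : ℕ) (hm : m % 4 = 2) : ∃ p q r : ℤ, (m : ℤ) = p ^ 2 + q ^ 2 + r ^ 2 := by
  have hcop : (m - 1).Coprime (4 * m) := by
    have h1 : (m - 1).Coprime m := by
      have : m = (m - 1) + 1 := by omega
      conv_rhs => rw [this]
      simp
    have h2 : (m - 1).Coprime 4 := by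
      have : (m - 1).Coprime (2 ^ 2) :=
        Nat.Coprime.pow_right 2 ((Nat.coprime_two_right).2 (Nat.odd_iff.2 (by omega)))
      simpa using this
    exact Nat.Coprime.mul_right h2 h1
  obtain ⟨p, hpm, hp, hmod⟩ := Nat.forall_exists_prime_gt_and_modEq m (q := 4 * m) (by omega) hcop
  obtain ⟨v, hv⟩ : ∃ v, p = (m - 1) + 4 * m * v := by
    have := (Nat.modEq_iff_dvd' (by omega)).1 hmod.symm
    obtain ⟨v, hv⟩ := this
    exact ⟨v, by omega⟩
  have hp1 : p + 1 = (4 * v + 1) * m := by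
    have : (4 * v + 1) * m = 4 * m * v + m := by ring
    omega
  set b := 4 * v + 1 with hb
  have : Fact p.Prime := ⟨hp⟩
  have hp4 : p % 4 = 1 := by
    have : 4 * m * v = 4 * (m * v) := by ring
    omega
  have hbodd : Odd b := Nat.odd_iff.2 (by omega)
  have hb4 : b % 4 = 1 := by omega
  have hJ : jacobiSym (-(b : ℤ)) p = 1 := by
    rw [jacobiSym.neg _ (Nat.odd_iff.2 (by omega)), ZMod.χ₄_nat_one_mod_four hp4, one_mul,
      jacobiSym.quadratic_reciprocity_one_mod_four hb4 (Nat.odd_iff.2 (by omega))]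
    have : (p : ℤ) % b = (-1) % b := by
      apply Int.ModEq.symm
      rw [Int.modEq_iff_dvd]
      exact ⟨m, by have : (p : ℤ) + 1 = b * m := by exact_mod_cast hp1
                   linarith⟩
    rw [jacobiSym.mod_left' this, jacobiSym.at_neg_one hbodd, ZMod.χ₄_nat_one_mod_four hb4]
  have hsq : IsSquare ((-(b : ℤ) : ℤ) : ZMod p) := by
    rw [← jacobiSym.legendreSym.to_jacobiSym] at hJ
    by_cases h0 : ((-(b : ℤ) : ℤ) : ZMod p) = 0
    · rw [h0]; exact IsSquare.zero
    · exact (legendreSym.eq_one_iff p h0).1 hJ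
  obtain ⟨w, hw⟩ := hsq
  obtain ⟨t, rfl⟩ := ZMod.intCast_surjective w
  have hd : (p : ℤ) ∣ t ^ 2 + b := by
    rw [← ZMod.intCast_zmod_eq_zero_iff_dvd]
    push_cast
    push_cast at hw
    linear_combination -hw
  obtain ⟨a, ha⟩ := hd
  have hbpos : (0 : ℤ) < b := by positivity
  have hppos : (0 : ℤ) < p := by exact_mod_cast hp.pos
  have hapos : 0 < a := by
    by_contra h
    nlinarith [sq_nonneg t]
  have hB : a * p - t ^ 2 = b := by linarith
  have hp1' : (p : ℤ) + 1 = b * m := by exact_mod_cast hp1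
  obtain ⟨x, y, z, h⟩ := tern_sum (a + b + 1).toNat a p m 0 1 t hapos (by rw [hB]; exact hbpos)
    (by linear_combination (m : ℤ) * hB - hp1') (by rw [hB]; omega) 0 0 1
  exact ⟨x, y, z, by rw [← h]; unfold tern; ring⟩

theorem oct_of_sq (a : ℤ) (h : a % 3 ≠ 0) : ∃ t : ℤ, 3 * (3 * t ^ 2 - 2 * t) + 1 = a ^ 2 := by
  rcases (by omega : a % 3 = 1 ∨ a % 3 = 2) with h | h
  · refine ⟨(1 - a) / 3, ?_⟩
    obtain ⟨k, hk⟩ : ∃ k, (1 - a) / 3 = k := ⟨_, rfl⟩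
    have : a = 1 - 3 * k := by omega
    rw [hk, this]; ring
  · refine ⟨(1 + a) / 3, ?_⟩
    obtain ⟨k, hk⟩ : ∃ k, (1 + a) / 3 = k := ⟨_, rfl⟩
    have : a = 3 * k - 1 := by omega
    rw [hk, this]; ring

theorem three_oct (n : ℤ) (hn : 0 ≤ n) (h : n % 12 = 1 ∨ n % 12 = 9) : ∃ t s u : ℤ,
    (3 * t ^ 2 - 2 * t) + (3 * s ^ 2 - 2 * s) + (3 * u ^ 2 - 2 * u) = n := by
  obtain ⟨a, b, c, habc⟩ := three_sq (3 * n + 3).toNat (by omega)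
  rw [Int.toNat_of_nonneg (by omega)] at habc
  have key : a % 3 ≠ 0 ∧ b % 3 ≠ 0 ∧ c % 3 ≠ 0 := by
    have h9 : (a ^ 2 + b ^ 2 + c ^ 2) % 9 = 3 ∨ (a ^ 2 + b ^ 2 + c ^ 2) % 9 = 6 := by omega
    have hsq : ∀ w : ℤ, (w % 3 = 0 ∧ w ^ 2 % 9 = 0) ∨ (w % 3 ≠ 0 ∧ w ^ 2 % 3 = 1) := by
      intro w
      rcases (by omega : w % 3 = 0 ∨ w % 3 = 1 ∨ w % 3 = 2) with h | h | h
      · left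
        obtain ⟨k, rfl⟩ : ∃ k, w = 3 * k := ⟨w / 3, by omega⟩
        refine ⟨h, ?_⟩
        have : (3 * k) ^ 2 = 9 * k ^ 2 := by ring
        omega
      · right; exact ⟨by omega, by simp [pow_two, Int.mul_emod, h]⟩
      · right; exact ⟨by omega, by simp [pow_two, Int.mul_emod, h]⟩
    have := hsq a
    have := hsq b
    have := hsq c
    omega
  obtain ⟨t, ht⟩ := oct_of_sq a key.1
  obtain ⟨s, hs⟩ := oct_of_sq b key.2.1
  obtain ⟨u, hu⟩ := oct_of_sq c key.2.2
  exact ⟨t, s, u, by linarith⟩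

def chk (N : ℕ) : Bool :=
  [(0, 0), (1, 0), (1, 1), (5, 0), (5, 1), (5, 5), (8, 0), (8, 1), (8, 8), (16, 16)].any fun c =>
    [0, 1, 2, 3, 4, 5, 6, 7, 8, 9, 10, 11].any fun y =>
      [0, 1, 2, 3, 4, 5, 6, 7, 8, 9, 10, 11, 12, 13, 14, 15, 16].any fun x =>
        [0, 1, 5, 8].any fun d => Nat.beq (x * x + 2 * (y * y) + 5 * (c.1 + c.2 + d)) N

theorem chk_all : (List.range 275).all (fun N => Nat.beq N 20 || chk N) = true := by
  decide +kernel

theorem oct_vals (v : ℕ) (h : v = 0 ∨ v = 1 ∨ v = 5 ∨ v = 8 ∨ v = 16) :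
    ∃ t : ℤ, 3 * t ^ 2 - 2 * t = v := by
  rcases h with rfl | rfl | rfl | rfl | rfl
  · exact ⟨0, by norm_num⟩
  · exact ⟨1, by norm_num⟩
  · exact ⟨-1, by norm_num⟩
  · exact ⟨2, by norm_num⟩
  · exact ⟨-2, by norm_num⟩

theorem small_residue : ∀ r ∈ Finset.range 60, ∃ x ∈ Finset.range 16, ∃ y ∈ Finset.range 11,
    x ^ 2 + 2 * y ^ 2 ≤ 275 ∧
    ((r + 300 - (x ^ 2 + 2 * y ^ 2)) % 60 = 5 ∨ (r + 300 - (x ^ 2 + 2 * y ^ 2)) % 60 = 45) := by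
  decide +kernel

theorem small_N (N : ℕ) (hN : N < 275) (h20 : N ≠ 20) : ∃ x y t s u : ℤ,
    x ^ 2 + 2 * y ^ 2 + 5 * (3 * t ^ 2 - 2 * t) +
          5 * (3 * s ^ 2 - 2 * s) + 5 * (3 * u ^ 2 - 2 * u) = (N : ℤ) := by
  have h := List.all_eq_true.1 chk_all N (List.mem_range.2 hN)
  rw [Bool.or_eq_true] at h
  rcases h with h | h
  · exact absurd (Nat.eq_of_beq_eq_true h) h20
  · unfold chk at h
    obtain ⟨c, hc, h⟩ := List.any_eq_true.1 h
    obtain ⟨y, _, h⟩ := List.any_eq_true.1 h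
    obtain ⟨x, _, h⟩ := List.any_eq_true.1 h
    obtain ⟨d, hd, h⟩ := List.any_eq_true.1 h
    have h := Nat.eq_of_beq_eq_true h
    obtain ⟨t, ht⟩ := oct_vals c.1 (by
      simp only [List.mem_cons, List.not_mem_nil, or_false] at hc
      rcases hc with rfl | rfl | rfl | rfl | rfl | rfl | rfl | rfl | rfl | rfl <;> simp)
    obtain ⟨s, hs⟩ := oct_vals c.2 (by
      simp only [List.mem_cons, List.not_mem_nil, or_false] at hc
      rcases hc with rfl | rfl | rfl | rfl | rfl | rfl | rfl | rfl | rfl | rfl <;> simp)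
    obtain ⟨u, hu⟩ := oct_vals d (by
      simp only [List.mem_cons, List.not_mem_nil, or_false] at hd
      omega)
    refine ⟨x, y, t, s, u, ?_⟩
    rw [ht, hs, hu, ← h]
    push_cast
    ring

theorem main_rep (N : ℤ) (h0 : 0 ≤ N) (h20 : N ≠ 20) : ∃ x y t s u : ℤ,
    x ^ 2 + 2 * y ^ 2 + 5 * (3 * t ^ 2 - 2 * t) +
          5 * (3 * s ^ 2 - 2 * s) + 5 * (3 * u ^ 2 - 2 * u) = N := by
  lift N to ℕ using h0
  by_cases hN : N < 275
  · exact small_N N hN (by exact_mod_cast h20)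
  · obtain ⟨x, _, y, _, hle, h⟩ := small_residue (N % 60) (Finset.mem_range.2 (by omega))
    obtain ⟨w, hw⟩ : ∃ w, x ^ 2 + 2 * y ^ 2 = w := ⟨_, rfl⟩
    rw [hw] at hle h
    obtain ⟨t, s, u, hh⟩ := three_oct (((N : ℤ) - w) / 5) (by omega) (by omega)
    refine ⟨x, y, t, s, u, ?_⟩
    have hw' : (x : ℤ) ^ 2 + 2 * (y : ℤ) ^ 2 = w := by exact_mod_cast hw
    have : 5 * (((N : ℤ) - w) / 5) = N - w := by omega
    linarith

theorem universal_case_6_1 :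
    (∀ α : ℤ, 16 ≤ α → α ≤ 20 → ∀ N : ℤ, 0 ≤ N →
      ∃ x y z t s u : ℤ,
        x ^ 2 + 2 * y ^ 2 + α * z ^ 2 + 5 * (3 * t ^ 2 - 2 * t) +
          5 * (3 * s ^ 2 - 2 * s) + 5 * (3 * u ^ 2 - 2 * u) = N) ∧
    (∀ β : ℤ, β = 5 ∨ (16 ≤ β ∧ β ≤ 20) → ∀ N : ℤ, 0 ≤ N →
      ∃ x y z t s u : ℤ,
        x ^ 2 + 2 * y ^ 2 + 5 * (3 * z ^ 2 - 2 * z) + 5 * (3 * t ^ 2 - 2 * t) +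
          5 * (3 * s ^ 2 - 2 * s) + β * (3 * u ^ 2 - 2 * u) = N) := by
  have small : ∀ α : ℤ, 16 ≤ α → α ≤ 20 → ∃ x y : ℤ, x ^ 2 + 2 * y ^ 2 = 20 - α := by
    intro α h1 h2
    interval_cases α
    · exact ⟨2, 0, by norm_num⟩
    · exact ⟨1, 1, by norm_num⟩
    · exact ⟨0, 1, by norm_num⟩
    · exact ⟨1, 0, by norm_num⟩
    · exact ⟨0, 0, by norm_num⟩
  constructor
  · intro α h1 h2 N h0
    by_cases h20 : N = 20
    · obtain ⟨x, y, h⟩ := small α h1 h2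
      exact ⟨x, y, 1, 0, 0, 0, by linarith⟩
    · obtain ⟨x, y, t, s, u, h⟩ := main_rep N h0 h20
      exact ⟨x, y, 0, t, s, u, by linarith⟩
  · intro β hβ N h0
    by_cases h20 : N = 20
    · rcases hβ with rfl | ⟨h1, h2⟩
      · exact ⟨0, 0, 1, 1, 1, 1, by rw [h20]; norm_num⟩
      · obtain ⟨x, y, h⟩ := small β h1 h2
        exact ⟨x, y, 0, 0, 0, 1, by linarith⟩
    · obtain ⟨x, y, t, s, u, h⟩ := main_rep N h0 h20
      exact ⟨x, y, t, s, u, 0, by linarith⟩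
end
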